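/- Let A be a unital C*-algebra and Φ : A → A a completely positive subunital map. Then for all a ∈ A the Kadison–Schwarz inequality Φ(a*a) ≥ Φ(a)*Φ(a) holds. -/

import Mathlib

/-!
Apply `Φ` entrywise to the positive matrix `[1, a; a⋆, a⋆ a]`; the result is `Cᴴ * C` for some
`C`. Compressing `Cᴴ * C` by the column vector `(-Φ a, 1)`, and using that its off-diagonal
entries are `Φ a` and `(Φ a)⋆`, gives
`0 ≤ Φ (a⋆ a) - 2 (Φ a)⋆ (Φ a) + (Φ a)⋆ (Φ 1) (Φ a)`,
and `Φ 1 ≤ 1` bounds the last term by `(Φ a)⋆ (Φ a)`.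
-/

open Matrix

/-- A linear map on a C*-algebra is completely positive if its entrywise
extension to every matrix algebra maps positive elements (elements of the
form `Bᴴ * B`) to positive elements. -/
def IsCompletelyPositive {A : Type*} [NormedRing A] [StarRing A]
    [NormedAlgebra ℂ A] (Φ : A →ₗ[ℂ] A) : Prop :=
  ∀ (n : ℕ) (X : Matrix (Fin n) (Fin n) A),
    (∃ B : Matrix (Fin n) (Fin n) A, X = Bᴴ * B) →
    ∃ C : Matrix (Fin n) (Fin n) A, X.map Φ = Cᴴ * C

/-- Kadison–Schwarz inequality for completely positive subunital maps. -/
theorem kadison_schwarz_of_cp_subunital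
    {A : Type*} [NormedRing A] [StarRing A] [CStarRing A] [CompleteSpace A]
    [NormedAlgebra ℂ A] [StarModule ℂ A] [PartialOrder A] [StarOrderedRing A]
    (Φ : A →ₗ[ℂ] A) (hΦ : IsCompletelyPositive Φ) (hsub : Φ 1 ≤ 1) :
    ∀ a : A, star (Φ a) * Φ a ≤ Φ (star a * a) := by
  intro a
  obtain ⟨C, hC⟩ := hΦ 2 !![1, a; star a, star a * a] ⟨!![1, a; 0, 0], by
    ext i j
    fin_cases i <;> fin_cases j <;> simp [Matrix.mul_apply]⟩
  have h00 : Φ 1 = star (C 0 0) * C 0 0 + star (C 1 0) * C 1 0 := by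
    simpa [Matrix.mul_apply] using congr_fun₂ hC 0 0
  have h01 : Φ a = star (C 0 0) * C 0 1 + star (C 1 0) * C 1 1 := by
    simpa [Matrix.mul_apply] using congr_fun₂ hC 0 1
  have h11 : Φ (star a * a) = star (C 0 1) * C 0 1 + star (C 1 1) * C 1 1 := by
    simpa [Matrix.mul_apply] using congr_fun₂ hC 1 1
  have hstar : star (Φ a) = star (C 0 1) * C 0 0 + star (C 1 1) * C 1 0 := by
    simp [h01]
  set y := Φ a with hy
  -- `C * (-y, 1)` has coordinates `C i 1 - C i 0 * y`; the sum of their squares is nonnegative.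
  have hpos : 0 ≤ star (C 0 1 - C 0 0 * y) * (C 0 1 - C 0 0 * y)
      + star (C 1 1 - C 1 0 * y) * (C 1 1 - C 1 0 * y) :=
    add_nonneg (star_mul_self_nonneg _) (star_mul_self_nonneg _)
  have hexp : star (C 0 1 - C 0 0 * y) * (C 0 1 - C 0 0 * y)
      + star (C 1 1 - C 1 0 * y) * (C 1 1 - C 1 0 * y)
      = Φ (star a * a) - star y * y - (star y * 1 * y - star y * Φ 1 * y) := by
    have e1 : star y * y = star y * (star (C 0 0) * C 0 1 + star (C 1 0) * C 1 1) := by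
      rw [← h01]
    have e2 : star y * 1 * y = (star (C 0 1) * C 0 0 + star (C 1 1) * C 1 0) * y := by
      rw [← hstar, mul_one]
    rw [h11, e1, e2, h00]
    simp only [star_sub, star_mul]
    noncomm_ring
  have hconj : star y * Φ 1 * y ≤ star y * 1 * y := star_left_conjugate_le_conjugate hsub y
  rw [hexp] at hpos
  exact sub_nonneg.mp ((sub_nonneg.mpr hconj).trans (sub_nonneg.mp hpos))
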